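/- Let n be a natural number with n > 10, and let ε, γ̄, λ, γ, D, V, T_EM, T_c be real numbers with 0 < ε < 1, 0 < γ̄ ≤ 1, λ·γ ≥ γ̄, D ≥ 1, n ≤ V ≤ n·D/2, T_EM ≥ ε^{-2} · D · exp(λ·γ·V), and 0 < T_c ≤ V · 2^n. Then T_c < T_EM^{1/γ̄}. -/

import Mathlib

/-!
Since `ε⁻² D > 1` and `λγ ≥ γ̄`, the error-mitigation run time exceeds `exp (γ̄ V)`, so its power
`1 / γ̄` exceeds `exp V`. It therefore suffices that `V * 2 ^ n ≤ V * exp (V log 2) ≤ exp V`, which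
holds for `V ≥ 11` because the exponential gap `exp ((1 - log 2) V)` already dominates `V`
(`mul_two_pow_le_exp`).
-/

/-- An exponential with rate `0.3 < 1 - log 2` dominates the identity beyond `11`. -/
lemma le_exp_three_tenths {V : ℝ} (hV : 11 ≤ V) : V ≤ Real.exp (0.3 * V) := by
  -- The quadratic Taylor bound at `0.3 V` is too weak near `V = 11`; at `0.15 V`, squared, it works.
  have hq := Real.quadratic_le_exp_of_nonneg (x := 0.15 * V) (by linarith)
  have hlin : 0.36 * V ≤ Real.exp (0.15 * V) := by
    nlinarith [sq_nonneg (V - 28 / 3)]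
  have hsq : Real.exp (0.3 * V) = Real.exp (0.15 * V) * Real.exp (0.15 * V) := by
    rw [← Real.exp_add]; ring_nf
  rw [hsq]
  nlinarith [mul_self_le_mul_self (by linarith : (0 : ℝ) ≤ 0.36 * V) hlin]

lemma mul_two_pow_le_exp {n : ℕ} {V : ℝ} (hV : 11 ≤ V) (hnV : (n : ℝ) ≤ V) :
    V * 2 ^ n ≤ Real.exp V := by
  have h2 : (2 : ℝ) ^ n ≤ Real.exp (0.7 * V) := by
    have hpow : (2 : ℝ) ^ n = Real.exp (n * Real.log 2) := by
      rw [Real.exp_nat_mul, Real.exp_log two_pos]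
    rw [hpow, Real.exp_le_exp]
    have hlog : Real.log 2 ≤ 0.7 := by linarith [Real.log_two_lt_d9]
    nlinarith [mul_le_mul_of_nonneg_left hlog (Nat.cast_nonneg (α := ℝ) n)]
  calc V * 2 ^ n ≤ Real.exp (0.3 * V) * Real.exp (0.7 * V) :=
        mul_le_mul (le_exp_three_tenths hV) h2 (by positivity) (by positivity)
    _ = Real.exp V := by rw [← Real.exp_add]; ring_nf

/-- Corollary 1, case (i): if the EM run time satisfies the exponential-in-volume
lower bound `T_EM ≥ ε⁻² D exp(λγV)` with `λγ ≥ γ̄ ∈ (0,1]`, and the classical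
run time satisfies `0 < T_c ≤ V · 2^n`, then `T_c < T_EM^(1/γ̄)`. -/
theorem classical_runtime_poly_bounded_by_em (n : ℕ) (hn : n > 10)
    (eps gbar lam gam D V T_EM T_c : ℝ)
    (heps0 : 0 < eps) (heps1 : eps < 1)
    (hgbar0 : 0 < gbar) (hgbar1 : gbar ≤ 1)
    (hlg : lam * gam ≥ gbar)
    (hD : D ≥ 1)
    (hnV : (n : ℝ) ≤ V) (hVD : V ≤ n * D / 2)
    (hTEM : T_EM ≥ eps ^ (-2 : ℤ) * D * Real.exp (lam * gam * V))
    (hTc0 : 0 < T_c) (hTc : T_c ≤ V * 2 ^ n) :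
    T_c < T_EM ^ (1 / gbar) := by
  have hV : (11 : ℝ) ≤ V := le_trans (by exact_mod_cast hn) hnV
  have heps : 1 < eps ^ (-2 : ℤ) := by
    rw [zpow_neg]
    exact (one_lt_inv₀ (by positivity)).2 (by exact_mod_cast pow_lt_one₀ heps0.le heps1 two_ne_zero)
  have hfac : 1 < eps ^ (-2 : ℤ) * D := by nlinarith
  have hexp : Real.exp (gbar * V) ≤ Real.exp (lam * gam * V) :=
    Real.exp_le_exp.2 (mul_le_mul_of_nonneg_right hlg (by linarith))
  have hT : Real.exp (gbar * V) < T_EM := by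
    nlinarith [mul_pos (sub_pos.2 hfac) (Real.exp_pos (lam * gam * V))]
  calc T_c ≤ V * 2 ^ n := hTc
    _ ≤ Real.exp V := mul_two_pow_le_exp hV hnV
    _ = Real.exp (gbar * V) ^ (1 / gbar) := by
        rw [← Real.exp_mul]; congr 1; field_simp
    _ < T_EM ^ (1 / gbar) :=
        Real.rpow_lt_rpow (Real.exp_pos _).le hT (by positivity)
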